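/- Assume the standing Lyapunov-pair setup for f: Y -> Y with nonempty compact isolated invariant set K, and let B = P_1^{delta_0} (for some sufficiently small delta_0 > 0) be the resulting positively f-invariant, f-admissible isolating neighborhood of K. Let f_n: Y -> Y be continuous maps with f_n -> f, and assume N' is {f_{n_m}}-admissible for every subsequence (f_{n_m}) of (f_n). Set U~ = int(B) and V(a) = {x in U~ : phi(x) < a}. Then: (i) there is a_0 > 0 such that N := cl(V(a_0)) is contained in U~; (ii) there is eps_0 > 0 such that for every 0 < eps <= eps_0 there is n_0(eps) with the property that for all n >= n_0(eps) there exists a closed, positively f_n-invariant set N_n(eps) with K_n contained in V(eps), V(eps) contained in N_n(eps), and N_n(eps) contained in N, where K_n denotes the maximal f_n-invariant set A_{f_n}(N). -/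

import Mathlib

open MeasureTheory Topology Filter Metric Set
open scoped ENNReal NNReal

noncomputable section

variable {Y : Type*}

/-- A set `N` is positively invariant under `g`. -/
def PosInvariant (g : Y → Y) (N : Set Y) : Prop :=
  ∀ x ∈ N, g x ∈ N

/-- There is a full left solution of `g` in `N` through `x` (indexed so that `u n = x_{-n}`). -/
def FullLeftSolution (g : Y → Y) (N : Set Y) (x : Y) : Prop :=
  ∃ u : ℕ → Y, u 0 = x ∧ (∀ k, g (u (k + 1)) = u k) ∧ ∀ k, u k ∈ N

/-- The maximal positively invariant subset `A⁺(N)` of `N`. -/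
def aPlus (g : Y → Y) (N : Set Y) : Set Y :=
  {x | x ∈ N ∧ ∀ k : ℕ, g^[k] x ∈ N}

/-- The maximal negatively invariant subset `A⁻(N)` of `N`. -/
def aMinus (g : Y → Y) (N : Set Y) : Set Y :=
  {x | x ∈ N ∧ FullLeftSolution g N x}

/-- The maximal invariant subset `A(N) = A⁺(N) ∩ A⁻(N)` of `N`. -/
def maxInv (g : Y → Y) (N : Set Y) : Set Y :=
  aPlus g N ∩ aMinus g N

/-- `N` is an isolating neighborhood of the isolated invariant set `K` for `g`. -/
def IsIsolatingNbhd [TopologicalSpace Y] (g : Y → Y) (K N : Set Y) : Prop :=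
  IsClosed N ∧ K ⊆ interior N ∧ maxInv g N = K

/-- `N` is `{gₙ}`-admissible: endpoints of longer and longer orbit segments staying in `N`
have a convergent subsequence. -/
def SeqAdmissible [TopologicalSpace Y] (g : ℕ → Y → Y) (N : Set Y) : Prop :=
  ∀ (x : ℕ → Y) (m : ℕ → ℕ), Tendsto m atTop atTop →
    (∀ n, ∀ k ≤ m n, (g n)^[k] (x n) ∈ N) →
    ∃ (y : Y) (φ : ℕ → ℕ), StrictMono φ ∧
      Tendsto (fun j => (g (φ j))^[m (φ j)] (x (φ j))) atTop (𝓝 y)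

/-- `N` is `g`-admissible. -/
def Admissible [TopologicalSpace Y] (g : Y → Y) (N : Set Y) : Prop :=
  SeqAdmissible (fun _ => g) N

/-- `gₙ → g` in the sense that `gₙ(xₙ) → g(x)` whenever `xₙ → x`. -/
def MapSeqConv [TopologicalSpace Y] (g : ℕ → Y → Y) (f : Y → Y) : Prop :=
  ∀ (x : ℕ → Y) (x₀ : Y), Tendsto x atTop (𝓝 x₀) →
    Tendsto (fun n => g n (x n)) atTop (𝓝 (f x₀))

/-- The set `P₁^ε = N ∩ cl {x ∈ int N' : φ(x) < ε}` from the Lyapunov-pair construction. -/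
def P1set [TopologicalSpace Y] (N N' : Set Y) (φ : Y → ℝ) (ε : ℝ) : Set Y :=
  N ∩ closure {x | x ∈ interior N' ∧ φ x < ε}

/-- The set `V(a) = {x ∈ int B : φ(x) < a}`. -/
def Vset [TopologicalSpace Y] (B : Set Y) (φ : Y → ℝ) (a : ℝ) : Set Y :=
  {x | x ∈ interior B ∧ φ x < a}

/-- The standing Lyapunov-pair setup: a continuous map `f` with a nonempty compact isolated
invariant set `K`, `f`-admissible isolating neighborhoods `N ⊆ int N' ∩ f⁻¹(int N')` with
`A⁻(N) = A(N) = K`, and a Lyapunov pair `(φ, γ)` on a neighborhood `W` of `K`. -/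
structure LyapunovSetup (Y : Type*) [MetricSpace Y] where
  f : Y → Y
  hf : Continuous f
  K : Set Y
  N : Set Y
  N' : Set Y
  W : Set Y
  phi : Y → ℝ
  gam : Y → ℝ
  hK_ne : K.Nonempty
  hK_cpt : IsCompact K
  hN_bdd : Bornology.IsBounded N
  hN'_bdd : Bornology.IsBounded N'
  hN_iso : IsIsolatingNbhd f K N
  hN'_iso : IsIsolatingNbhd f K N'
  hN_adm : Admissible f N
  hN'_adm : Admissible f N'
  hN_sub : N ⊆ interior N' ∩ f ⁻¹' (interior N')
  hAminus : aMinus f N = K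
  hW_nbhd : K ⊆ interior W
  hW_sub : W ⊆ N
  hW_dist : ∃ δ : ℝ, 0 < δ ∧ ∀ x ∈ W, ∀ y ∈ frontier N', δ ≤ dist x y
  hphi_cont : ContinuousOn phi W
  hgam_cont : ContinuousOn gam W
  hphi_nonneg : ∀ x ∈ W, 0 ≤ phi x
  hgam_nonneg : ∀ x ∈ W, 0 ≤ gam x
  hK_zero : ∀ x ∈ K, phi x = 0 ∧ gam x = 0
  hmono : ∀ x ∈ W, f x ∈ W → phi (f x) ≤ phi x ∧ gam x ≤ gam (f x)
  hphi_zero : ∀ x ∈ W, phi x = 0 → x ∈ aMinus f N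
  hphi_seq : ∀ x : ℕ → Y, (∀ n, x n ∈ W) → Tendsto (fun n => phi (x n)) atTop (𝓝 0) →
    ∃ (y : Y) (σ : ℕ → ℕ), StrictMono σ ∧ Tendsto (fun n => x (σ n)) atTop (𝓝 y)
  eps0 : ℝ
  eps0_pos : 0 < eps0
  hP1 : ∀ ε : ℝ, 0 < ε → ε ≤ eps0 →
    K ⊆ interior (P1set N N' phi ε) ∧ P1set N N' phi ε ⊆ W ∧
    (∀ x ∈ P1set N N' phi ε, f x ∈ N → f x ∈ P1set N N' phi ε) ∧
    (∀ x ∈ P1set N N' phi ε, f x ∉ N → ε ≤ gam x)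

/-- Weak convergence of a sequence with respect to an auxiliary topology `τ`. -/
def WConv (τ : TopologicalSpace Y) (u : ℕ → Y) (y : Y) : Prop :=
  Tendsto u atTop (@nhds Y τ y)

/-- The weak ω-limit set of `N` under `g` with respect to the topology `τ`. -/
def omegaWeak (τ : TopologicalSpace Y) (g : Y → Y) (N : Set Y) : Set Y :=
  {y | ∃ (x : ℕ → Y) (m : ℕ → ℕ), (∀ n, x n ∈ N) ∧ Tendsto m atTop atTop ∧
    WConv τ (fun n => g^[m n] (x n)) y}

/-- `K` is a weak attractor for `g` with respect to the weak topology `τ`: it admits a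
positively `g`-invariant isolating neighborhood `N` with `ω^weak(N) ⊆ K`. -/
def IsWeakAttractor [TopologicalSpace Y] (τ : TopologicalSpace Y) (g : Y → Y)
    (K : Set Y) : Prop :=
  ∃ N : Set Y, IsIsolatingNbhd g K N ∧ PosInvariant g N ∧ omegaWeak τ g N ⊆ K

/-- A set is sequentially compact with respect to the topology `τ`. -/
def WSeqCompact (τ : TopologicalSpace Y) (S : Set Y) : Prop :=
  ∀ u : ℕ → Y, (∀ n, u n ∈ S) →
    ∃ y ∈ S, ∃ σ : ℕ → ℕ, StrictMono σ ∧ WConv τ (fun k => u (σ k)) y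


theorem aux_conv {Y : Type*} [MetricSpace Y] {fn : ℕ → Y → Y} {f : Y → Y}
    (h : MapSeqConv fn f) (x : Y) :
    Tendsto (fun p : ℕ × Y => fn p.1 p.2) (atTop ×ˢ 𝓝 x) (𝓝 (f x)) := by
  apply tendsto_of_subseq_tendsto
  intro ns hns
  have h1 : Tendsto (fun i => (ns i).1) atTop atTop := tendsto_fst.comp hns
  have h2 : Tendsto (fun i => (ns i).2) atTop (𝓝 x) := tendsto_snd.comp hns
  obtain ⟨φ, hφ, hm⟩ := strictMono_subseq_of_tendsto_atTop h1
  refine ⟨φ, ?_⟩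
  classical
  -- fill in the missing indices with `x`
  let s : ℕ → ℕ := fun i => (ns (φ i)).1
  have hs : StrictMono s := hm
  let y : ℕ → Y := fun n => if hn : ∃ i, s i = n then (ns (φ hn.choose)).2 else x
  have hy : ∀ i, y (s i) = (ns (φ i)).2 := by
    intro i
    have hn : ∃ j, s j = s i := ⟨i, rfl⟩
    have : hn.choose = i := hs.injective hn.choose_spec
    simp only [y]
    rw [dif_pos hn, this]
  have hyt : Tendsto y atTop (𝓝 x) := by
    rw [tendsto_def]
    intro U hU
    have := (h2.comp hφ.tendsto_atTop).eventually hU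
    obtain ⟨i0, hi0⟩ := eventually_atTop.1 this
    filter_upwards [eventually_ge_atTop (s i0)] with n hn
    by_cases hx : ∃ i, s i = n
    · obtain ⟨i, rfl⟩ := hx
      rw [mem_preimage, hy]
      exact hi0 i (hs.le_iff_le.1 hn)
    · simp only [mem_preimage, y]
      rw [dif_neg hx]
      exact mem_of_mem_nhds hU
  have := (h y x hyt).comp hs.tendsto_atTop
  refine this.congr ?_
  intro i
  simp only [Function.comp, hy]
  rfl

theorem aux_conv_seq {Y : Type*} [MetricSpace Y] {fn : ℕ → Y → Y} {f : Y → Y}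
    (h : MapSeqConv fn f) {s : ℕ → ℕ} (hs : Tendsto s atTop atTop) {p : ℕ → Y} {x : Y}
    (hp : Tendsto p atTop (𝓝 x)) :
    Tendsto (fun i => fn (s i) (p i)) atTop (𝓝 (f x)) :=
  (aux_conv h x).comp (hs.prodMk hp)

theorem aux_conv_iter {Y : Type*} [MetricSpace Y] {fn : ℕ → Y → Y} {f : Y → Y}
    (h : MapSeqConv fn f) {s : ℕ → ℕ} (hs : Tendsto s atTop atTop) {p : ℕ → Y} {x : Y}
    (hp : Tendsto p atTop (𝓝 x)) (k : ℕ) :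
    Tendsto (fun i => (fn (s i))^[k] (p i)) atTop (𝓝 (f^[k] x)) := by
  induction k with
  | zero => simpa using hp
  | succ k ih =>
    simp only [Function.iterate_succ_apply']
    exact aux_conv_seq h hs ih

/-- Limits of endpoints of long orbit segments in `C`. -/
def limEnds {Y : Type*} [TopologicalSpace Y] (fn : ℕ → Y → Y) (C : Set Y) : Set Y :=
  {y | ∃ (s m : ℕ → ℕ) (z : ℕ → Y), StrictMono s ∧ Tendsto m atTop atTop ∧
    (∀ i, ∀ k ≤ m i, (fn (s i))^[k] (z i) ∈ C) ∧
    Tendsto (fun i => (fn (s i))^[m i] (z i)) atTop (𝓝 y)}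

theorem limEnds_back {Y : Type*} [MetricSpace Y] {fn : ℕ → Y → Y} {f : Y → Y}
    (h : MapSeqConv fn f) {C N' : Set Y} (hCN : C ⊆ N')
    (hadm : ∀ σ : ℕ → ℕ, StrictMono σ → SeqAdmissible (fun m => fn (σ m)) N')
    {y : Y} (hy : y ∈ limEnds fn C) : ∃ y' ∈ limEnds fn C, f y' = y := by
  obtain ⟨s, m, z, hs, hm, horb, hlim⟩ := hy
  have hm1 : Tendsto (fun i => m i - 1) atTop atTop :=
    (tendsto_sub_atTop_nat 1).comp hm
  obtain ⟨y', ψ, hψ, hy'⟩ := hadm s hs z (fun i => m i - 1) hm1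
    (fun i k hk => hCN (horb i k (hk.trans (Nat.sub_le _ _))))
  refine ⟨y', ⟨s ∘ ψ, fun i => m (ψ i) - 1, z ∘ ψ, hs.comp hψ, hm1.comp hψ.tendsto_atTop,
    fun i k hk => horb (ψ i) k (hk.trans (Nat.sub_le _ _)), hy'⟩, ?_⟩
  have h1 := aux_conv_seq h (hs.comp hψ).tendsto_atTop hy'
  have h2 := hlim.comp hψ.tendsto_atTop
  refine tendsto_nhds_unique (h1.congr' ?_) h2
  filter_upwards [(hm.comp hψ.tendsto_atTop).eventually (eventually_ge_atTop 1)] with i hi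
  simp only [Function.comp] at hi ⊢
  rw [← Function.iterate_succ_apply' (fn (s (ψ i)))]
  congr 2
  omega

theorem left_of_back {Y : Type*} {f : Y → Y} {G N : Set Y}
    (hG : ∀ y ∈ G, ∃ y' ∈ G, f y' = y) (hGN : G ⊆ N) : G ⊆ aMinus f N := by
  intro x hx
  choose g hg hfg using hG
  let F : G → G := fun y => ⟨g y.1 y.2, hg y.1 y.2⟩
  refine ⟨hGN hx, fun k => (F^[k] ⟨x, hx⟩ : G).1, rfl, ?_, fun k => hGN (F^[k] ⟨x, hx⟩).2⟩
  intro k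
  simp only [Function.iterate_succ_apply']
  exact hfg _ _

theorem key_lim {Y : Type*} [MetricSpace Y] {fn : ℕ → Y → Y} {f : Y → Y}
    (h : MapSeqConv fn f) {C N N' : Set Y} (hC : IsClosed C) (hCN : C ⊆ N) (hCN' : C ⊆ N')
    (hadm : ∀ σ : ℕ → ℕ, StrictMono σ → SeqAdmissible (fun m => fn (σ m)) N')
    {s m : ℕ → ℕ} {z : ℕ → Y} (hs : StrictMono s) (hm : Tendsto m atTop atTop)
    (horb : ∀ i, ∀ k ≤ m i, (fn (s i))^[k] (z i) ∈ C) :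
    ∃ y ∈ aMinus f N, ∃ ψ : ℕ → ℕ, StrictMono ψ ∧
      Tendsto (fun i => (fn (s (ψ i)))^[m (ψ i)] (z (ψ i))) atTop (𝓝 y) := by
  obtain ⟨y, ψ, hψ, hy⟩ := hadm s hs z m hm (fun i k hk => hCN' (horb i k hk))
  refine ⟨y, ?_, ψ, hψ, hy⟩
  have hG : limEnds fn C ⊆ N := by
    rintro y ⟨s, m, z, -, -, ho, hl⟩
    exact hCN (hC.mem_of_tendsto hl (Eventually.of_forall fun i => ho i _ le_rfl))
  exact left_of_back (fun y hy => limEnds_back h hCN' hadm hy) hG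
    ⟨s ∘ ψ, m ∘ ψ, z ∘ ψ, hs.comp hψ, hm.comp hψ.tendsto_atTop,
      fun i k hk => horb (ψ i) k hk, hy⟩

theorem LyapunovSetup.memW {Y : Type*} [MetricSpace Y] (S : LyapunovSetup Y) {x : Y}
    (hx : x ∈ S.N) (h : S.phi x < S.eps0) : x ∈ S.W :=
  (S.hP1 S.eps0 S.eps0_pos le_rfl).2.1 ⟨hx, subset_closure ⟨(S.hN_sub hx).1, h⟩⟩

theorem LyapunovSetup.seqK {Y : Type*} [MetricSpace Y] (S : LyapunovSetup Y) {x : ℕ → Y}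
    (hx : ∀ n, x n ∈ S.W) (h : Tendsto (fun n => S.phi (x n)) atTop (𝓝 0)) :
    ∃ y ∈ S.K, ∃ σ : ℕ → ℕ, StrictMono σ ∧ Tendsto (fun n => x (σ n)) atTop (𝓝 y) := by
  obtain ⟨y, σ, hσ, hy⟩ := S.hphi_seq x hx h
  refine ⟨y, ?_, σ, hσ, hy⟩
  have hyN : y ∈ S.N :=
    S.hN_iso.1.mem_of_tendsto hy (Eventually.of_forall fun n => S.hW_sub (hx _))
  have h' := h.comp hσ.tendsto_atTop
  have hyW : y ∈ S.W := by
    refine (S.hP1 S.eps0 S.eps0_pos le_rfl).2.1 ⟨hyN, mem_closure_of_tendsto hy ?_⟩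
    filter_upwards [h'.eventually (gt_mem_nhds S.eps0_pos)] with n hn
    exact ⟨(S.hN_sub (S.hW_sub (hx _))).1, hn⟩
  have hc : Tendsto (fun n => S.phi (x (σ n))) atTop (𝓝 (S.phi y)) :=
    (S.hphi_cont y hyW).tendsto.comp
      (tendsto_nhdsWithin_iff.2 ⟨hy, Eventually.of_forall fun n => hx _⟩)
  have h0 : S.phi y = 0 := tendsto_nhds_unique hc h'
  rw [← S.hAminus]
  exact S.hphi_zero y hyW h0

theorem LyapunovSetup.fK {Y : Type*} [MetricSpace Y] (S : LyapunovSetup Y) {x : Y}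
    (hx : x ∈ S.K) : S.f x ∈ S.K := by
  have h1 : x ∈ maxInv S.f S.N := by rw [S.hN_iso.2.2]; exact hx
  obtain ⟨⟨-, hp⟩, hxN, u, hu0, hu, huN⟩ := h1
  have hfx : S.f x ∈ S.N := hp 1
  rw [← S.hAminus]
  refine ⟨hfx, fun k => Nat.casesOn k (S.f x) u, rfl, ?_, ?_⟩
  · intro k
    cases k with
    | zero => simp [hu0]
    | succ k => exact hu k
  · intro k
    cases k with
    | zero => exact hfx
    | succ k => exact huN k

theorem LyapunovSetup.fKiter {Y : Type*} [MetricSpace Y] (S : LyapunovSetup Y) {x : Y}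
    (hx : x ∈ S.K) (k : ℕ) : S.f^[k] x ∈ S.K := by
  induction k with
  | zero => exact hx
  | succ k ih => rw [Function.iterate_succ_apply']; exact S.fK ih

theorem aux_lim0 (c : ℝ) : Tendsto (fun i : ℕ => c / ((i : ℝ) + 1)) atTop (𝓝 0) := by
  simpa [div_eq_mul_inv] using (tendsto_one_div_add_atTop_nhds_zero_nat (𝕜 := ℝ)).const_mul c

theorem LyapunovSetup.seqV {Y : Type*} [MetricSpace Y] (S : LyapunovSetup Y) {B : Set Y}
    (hB : B ⊆ S.N) {a : ℝ} (ha : 0 < a) (ha' : a ≤ S.eps0) {x : ℕ → Y}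
    (hx : ∀ i : ℕ, x i ∈ Vset B S.phi (a / ((i : ℝ) + 1))) :
    ∃ y ∈ S.K, ∃ σ : ℕ → ℕ, StrictMono σ ∧ Tendsto (fun n => x (σ n)) atTop (𝓝 y) := by
  have hW : ∀ i, x i ∈ S.W := by
    intro i
    refine S.memW (hB (interior_subset (hx i).1)) ((hx i).2.trans_le (le_trans ?_ ha'))
    exact div_le_self ha.le (by linarith [(Nat.cast_nonneg i : (0:ℝ) ≤ i)])
  exact S.seqK hW (squeeze_zero (fun i => S.hphi_nonneg _ (hW i)) (fun i => (hx i).2.le)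
    (aux_lim0 a))

theorem LyapunovSetup.exists_a0 {Y : Type*} [MetricSpace Y] (S : LyapunovSetup Y) {B U : Set Y}
    (hB : B ⊆ S.N) (hU : IsOpen U) (hKU : S.K ⊆ U) :
    ∃ a : ℝ, 0 < a ∧ a ≤ S.eps0 ∧ closure (Vset B S.phi a) ⊆ U := by
  by_contra hcon
  push Not at hcon
  have hpos : ∀ i : ℕ, (0:ℝ) < (i : ℝ) + 1 := fun i => by positivity
  have h1 : ∀ i : ℕ, ∃ x ∈ closure (Vset B S.phi (S.eps0 / ((i : ℝ) + 1))), x ∉ U := by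
    intro i
    exact not_subset.1 (hcon _ (div_pos S.eps0_pos (hpos i))
      (div_le_self S.eps0_pos.le (by linarith [(Nat.cast_nonneg i : (0:ℝ) ≤ i)])))
  choose x hx hxU using h1
  have h2 : ∀ i : ℕ, ∃ y ∈ Vset B S.phi (S.eps0 / ((i : ℝ) + 1)),
      dist (x i) y < 1 / ((i : ℝ) + 1) := fun i =>
    Metric.mem_closure_iff.1 (hx i) _ (div_pos one_pos (hpos i))
  choose y hy hxy using h2
  obtain ⟨k, hk, σ, hσ, hl⟩ := S.seqV hB S.eps0_pos le_rfl hy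
  have hd : Tendsto (fun i => dist (y (σ i)) (x (σ i))) atTop (𝓝 0) := by
    refine squeeze_zero (fun i => dist_nonneg) (fun i => ?_)
      ((aux_lim0 1).comp hσ.tendsto_atTop)
    rw [dist_comm]; exact (hxy _).le
  have hxl := (tendsto_iff_of_dist hd).1 hl
  obtain ⟨i, hi⟩ := (hxl.eventually (hU.mem_nhds (hKU hk))).exists
  exact hxU _ hi

/-- **Continuation of the positively invariant neighborhood** under perturbations
`fₙ → f`: with `B = P₁^{δ₀}` the positively `f`-invariant admissible isolating
neighborhood of `K`, `Ũ = int B` and `V(a) = {x ∈ Ũ : φ(x) < a}`, there is `a₀ > 0` with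
`N := cl V(a₀) ⊆ Ũ`, and there is `ε₀ > 0` such that for all `0 < ε ≤ ε₀` and all large
`n` there is a closed, positively `fₙ`-invariant set `Nₙ(ε)` with
`Kₙ ⊆ V(ε) ⊆ Nₙ(ε) ⊆ N`, where `Kₙ = A_{fₙ}(N)`. -/
theorem continuation_of_positively_invariant_nbhd
    {Y : Type*} [MetricSpace Y] [CompleteSpace Y] [TopologicalSpace.SeparableSpace Y]
    (S : LyapunovSetup Y)
    (δ₀ : ℝ) (hδ₀ : 0 < δ₀)
    (hB_pos : PosInvariant S.f (P1set S.N S.N' S.phi δ₀))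
    (hB_adm : Admissible S.f (P1set S.N S.N' S.phi δ₀))
    (hB_iso : IsIsolatingNbhd S.f S.K (P1set S.N S.N' S.phi δ₀))
    (fn : ℕ → Y → Y) (hfn_cont : ∀ n, Continuous (fn n))
    (hfn_conv : MapSeqConv fn S.f)
    (hN'_adm : ∀ σ : ℕ → ℕ, StrictMono σ → SeqAdmissible (fun m => fn (σ m)) S.N') :
    ∃ a₀ : ℝ, 0 < a₀ ∧
      closure (Vset (P1set S.N S.N' S.phi δ₀) S.phi a₀)
        ⊆ interior (P1set S.N S.N' S.phi δ₀) ∧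
      ∃ ε₀ : ℝ, 0 < ε₀ ∧ ∀ ε : ℝ, 0 < ε → ε ≤ ε₀ → ∃ n₀ : ℕ, ∀ n, n₀ ≤ n →
        ∃ Nn : Set Y, IsClosed Nn ∧ PosInvariant (fn n) Nn ∧
          maxInv (fn n) (closure (Vset (P1set S.N S.N' S.phi δ₀) S.phi a₀))
            ⊆ Vset (P1set S.N S.N' S.phi δ₀) S.phi ε ∧
          Vset (P1set S.N S.N' S.phi δ₀) S.phi ε ⊆ Nn ∧
          Nn ⊆ closure (Vset (P1set S.N S.N' S.phi δ₀) S.phi a₀) := by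
  set B := P1set S.N S.N' S.phi δ₀ with hBdef
  have hBN : B ⊆ S.N := inter_subset_left
  have hKB : S.K ⊆ interior B := hB_iso.2.1
  obtain ⟨a₀, ha, hae, hcl⟩ := S.exists_a0 hBN (isOpen_interior.inter isOpen_interior)
    (subset_inter hKB S.hW_nbhd)
  have hclB := hcl.trans inter_subset_left
  have hCN : closure (Vset B S.phi a₀) ⊆ S.N :=
    hclB.trans (interior_subset.trans hBN)
  have hCN' : closure (Vset B S.phi a₀) ⊆ S.N' :=
    fun x hx => interior_subset (S.hN_sub (hCN hx)).1
  have hmonoV : ∀ {a b : ℝ}, a ≤ b → Vset B S.phi a ⊆ Vset B S.phi b :=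
    fun hab x hx => ⟨hx.1, hx.2.trans_le hab⟩
  have hKV : ∀ a : ℝ, 0 < a → S.K ⊆ Vset B S.phi a := fun a h x hx =>
    ⟨hKB hx, by rw [(S.hK_zero x hx).1]; exact h⟩
  have hopen : ∀ a : ℝ, a ≤ a₀ → IsOpen (Vset B S.phi a) := by
    intro a haa
    have h1 : IsOpen (interior S.W ∩ S.phi ⁻¹' Iio a) :=
      (S.hphi_cont.mono interior_subset).isOpen_inter_preimage isOpen_interior isOpen_Iio
    have h2 : Vset B S.phi a = interior B ∩ (interior S.W ∩ S.phi ⁻¹' Iio a) := by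
      ext x
      constructor
      · intro hx
        exact ⟨hx.1, (hcl (subset_closure (hmonoV haa hx))).2, hx.2⟩
      · rintro ⟨h1, -, h3⟩
        exact ⟨h1, h3⟩
    rw [h2]
    exact isOpen_interior.inter h1
  -- the maximal invariant sets are eventually in `V ε`
  have claim1 : ∀ ε : ℝ, 0 < ε → ε ≤ a₀ → ∀ᶠ n in atTop,
      maxInv (fn n) (closure (Vset B S.phi a₀)) ⊆ Vset B S.phi ε := by
    intro ε hε hεa
    by_contra hcon
    obtain ⟨s, hs, hbad⟩ := extraction_of_frequently_atTop (not_eventually.1 hcon)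
    choose x hx hxV using fun i => not_subset.1 (hbad i)
    choose u hu0 hu huC using fun i => (hx i).2.2
    have hit : ∀ i k l, (fn (s i))^[k] (u i (k + l)) = u i l := by
      intro i k
      induction k with
      | zero => intro l; simp
      | succ k ih =>
        intro l
        rw [Function.iterate_succ_apply, show k + 1 + l = (k + l) + 1 by omega, hu, ih]
    obtain ⟨y, hy, ψ, hψ, hlim⟩ := key_lim hfn_conv isClosed_closure hCN hCN' hN'_adm
      (s := s) (m := fun i => i) (z := fun i => u i i) hs tendsto_id (by
        intro i k hk
        obtain ⟨l, rfl⟩ := Nat.exists_eq_add_of_le hk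
        show (fn (s (k + l)))^[k] (u (k + l) (k + l)) ∈ _
        rw [hit]
        exact huC _ _)
    rw [S.hAminus] at hy
    obtain ⟨i, hi⟩ := (hlim.eventually ((hopen ε hεa).mem_nhds (hKV ε hε hy))).exists
    apply hxV (ψ i)
    have := hit (ψ i) (ψ i) 0
    rw [add_zero, hu0] at this
    rw [← this]
    exact hi
  -- orbits from a small `V ε` stay in `V a₀`
  have claim2 : ∃ i : ℕ, ∀ᶠ n in atTop, ∀ x ∈ Vset B S.phi (a₀ / ((i : ℝ) + 1)),
      ∀ k, (fn n)^[k] x ∈ Vset B S.phi a₀ := by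
    by_contra hcon
    push Not at hcon
    obtain ⟨s, hs, hbad⟩ := extraction_forall_of_frequently hcon
    choose x hx hk using hbad
    obtain ⟨y, hy, σ, hσ, hl⟩ := S.seqV hBN ha hae hx
    have hm : ∀ i, ∃ m, (∀ k ≤ m, (fn (s i))^[k] (x i) ∈ Vset B S.phi a₀) ∧
        (fn (s i))^[m + 1] (x i) ∉ Vset B S.phi a₀ := by
      intro i
      classical
      have hne : Nat.find (hk i) ≠ 0 := by
        intro h0
        have h1 := Nat.find_spec (hk i)
        rw [h0] at h1
        exact h1 (hmonoV (div_le_self ha.le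
          (by linarith [(Nat.cast_nonneg i : (0:ℝ) ≤ i)])) (hx i))
      refine ⟨Nat.find (hk i) - 1, fun k hkm => ?_, ?_⟩
      · exact not_not.1 (Nat.find_min (hk i) (m := k) (by omega))
      · rw [show Nat.find (hk i) - 1 + 1 = Nat.find (hk i) by omega]
        exact Nat.find_spec (hk i)
    choose m hm1 hm2 using hm
    have hsσ := hs.comp hσ
    have hmt : Tendsto (m ∘ σ) atTop atTop := by
      rw [Filter.tendsto_atTop]
      intro b
      have hev : ∀ᶠ i in atTop, ∀ k ∈ Finset.range (b + 1),
          (fn (s (σ i)))^[k] (x (σ i)) ∈ Vset B S.phi a₀ := by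
        rw [Filter.eventually_all_finset]
        intro k _
        exact (aux_conv_iter hfn_conv hsσ.tendsto_atTop hl k).eventually
          ((hopen a₀ le_rfl).mem_nhds (hKV a₀ ha (S.fKiter hy k)))
      filter_upwards [hev] with i hi
      by_contra hlt
      simp only [Function.comp] at hlt
      exact hm2 (σ i) (hi _ (Finset.mem_range.2 (by omega)))
    obtain ⟨w, hw, ψ, hψ, hlim⟩ := key_lim hfn_conv isClosed_closure hCN hCN' hN'_adm
      (s := s ∘ σ) (m := m ∘ σ) (z := x ∘ σ) hsσ hmt
      (fun i k hk => subset_closure (hm1 (σ i) k hk))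
    rw [S.hAminus] at hw
    have h1 := aux_conv_seq hfn_conv (hsσ.comp hψ).tendsto_atTop hlim
    obtain ⟨i, hi⟩ := (h1.eventually
      ((hopen a₀ le_rfl).mem_nhds (hKV a₀ ha (S.fK hw)))).exists
    apply hm2 (σ (ψ i))
    rw [Function.iterate_succ_apply']
    exact hi
  obtain ⟨i, hi⟩ := claim2
  have hipos : (0:ℝ) < (i : ℝ) + 1 := by positivity
  have hile : a₀ / ((i : ℝ) + 1) ≤ a₀ :=
    div_le_self ha.le (by linarith [(Nat.cast_nonneg i : (0:ℝ) ≤ i)])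
  refine ⟨a₀, ha, hclB, a₀ / ((i : ℝ) + 1), div_pos ha hipos, fun ε hε hεle => ?_⟩
  obtain ⟨n₀, hn₀⟩ := eventually_atTop.1 (hi.and (claim1 ε hε (hεle.trans hile)))
  refine ⟨n₀, fun n hn => ?_⟩
  obtain ⟨hA, hKn⟩ := hn₀ n hn
  refine ⟨closure {z | ∃ x ∈ Vset B S.phi ε, ∃ k, (fn n)^[k] x = z}, isClosed_closure, ?_,
    hKn, fun x hx => subset_closure ⟨x, hx, 0, rfl⟩, closure_mono ?_⟩
  · intro z hz
    refine map_mem_closure (hfn_cont n) hz ?_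
    rintro _ ⟨x, hx, k, rfl⟩
    exact ⟨x, hx, k + 1, Function.iterate_succ_apply' _ _ _⟩
  · rintro _ ⟨x, hx, k, rfl⟩
    exact hA x (hmonoV hεle hx) k
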